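/- Let G be a maxPDAG with node set V, let X ⊂ V and Y ∈ V \ X such that G is amenable relative to (X,{Y}) and a valid adjustment set relative to (X,{Y}) in G exists (generalised adjustment criterion). Then the forbidden projection G^{XY} contains no bi-directed edges and no directed cycles, and G^{XY} is closed under Meek's orientation rules R1–R4; in particular, G^{XY} is itself a maxPDAG. -/

import Mathlib

/-! Framework for causal graphs: mixed graphs (directed, undirected, bi-directed edges),
paths as lists of typed steps, (possibly) directed paths, descendants, causal nodes,
forbidden sets, (definite-status) blocking, valid adjustment sets, Meek's rules,
maxPDAGs, latent/forbidden projections, d-separation. -/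

namespace Causal

universe u

variable {V : Type u}

/-- A mixed graph with directed, undirected and bi-directed edge relations. -/
structure MixedGraph (V : Type u) where
  dir : V → V → Prop
  undir : V → V → Prop
  bidir : V → V → Prop

/-- The kind of an edge as traversed along a path: forward directed (`a → b`),
backward directed (`a ← b`), undirected (`a − b`), or bi-directed (`a ↔ b`). -/
inductive EdgeKind : Type
  | fwd | bwd | und | bid
  deriving DecidableEq

/-- A step of a path: source node, kind of traversed edge, destination node. -/
abbrev Step (V : Type u) := V × EdgeKind × V

namespace Step
def src (s : Step V) : V := s.1
def kind (s : Step V) : EdgeKind := s.2.1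
def dst (s : Step V) : V := s.2.2
end Step

/-- The step `s` traverses an actual edge of `G`. Undirected and bi-directed
edge relations are used symmetrically. -/
def stepOK (G : MixedGraph V) (s : Step V) : Prop :=
  match Step.kind s with
  | EdgeKind.fwd => G.dir (Step.src s) (Step.dst s)
  | EdgeKind.bwd => G.dir (Step.dst s) (Step.src s)
  | EdgeKind.und => G.undir (Step.src s) (Step.dst s) ∨ G.undir (Step.dst s) (Step.src s)
  | EdgeKind.bid => G.bidir (Step.src s) (Step.dst s) ∨ G.bidir (Step.dst s) (Step.src s)

/-- The sequence of nodes visited by a list of steps. -/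
def pathNodes : List (Step V) → List V
  | [] => []
  | s :: rest => Step.src s :: (s :: rest).map Step.dst

/-- `p` is a path in `G`: a nonempty chain of valid steps visiting distinct nodes. -/
structure IsPath (G : MixedGraph V) (p : List (Step V)) : Prop where
  nonempty : p ≠ []
  valid : ∀ s ∈ p, stepOK G s
  chain : p.Chain' (fun s t => Step.dst s = Step.src t)
  nodup : (pathNodes p).Nodup

/-- The path starts at node `a`. -/
def startsAt (p : List (Step V)) (a : V) : Prop := (pathNodes p).head? = some a

/-- The path ends at node `b`. -/
def endsAt (p : List (Step V)) (b : V) : Prop := (pathNodes p).getLast? = some b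

/-- The non-endpoint (interior) nodes of the path. -/
def interiorNodes (p : List (Step V)) : List V := ((pathNodes p).drop 1).dropLast

/-- Consecutive pairs of steps of a path. -/
def stepPairs (p : List (Step V)) : List (Step V × Step V) := p.zip p.tail

/-- Does an edge of this kind have an arrowhead at the destination of its step? -/
def headAtDst : EdgeKind → Prop
  | EdgeKind.fwd => True | EdgeKind.bwd => False
  | EdgeKind.und => False | EdgeKind.bid => True

/-- Does an edge of this kind have an arrowhead at the source of its step? -/
def headAtSrc : EdgeKind → Prop
  | EdgeKind.fwd => False | EdgeKind.bwd => True
  | EdgeKind.und => False | EdgeKind.bid => True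

/-- `v` is a collider on the path `p`: both adjacent edges have an arrowhead at `v`. -/
def colliderAt (p : List (Step V)) (v : V) : Prop :=
  ∃ q ∈ stepPairs p, Step.dst q.1 = v ∧ headAtDst (Step.kind q.1) ∧ headAtSrc (Step.kind q.2)

/-- `v` is a non-endpoint non-collider on the path `p`. -/
def nonColliderAt (p : List (Step V)) (v : V) : Prop :=
  v ∈ interiorNodes p ∧ ¬ colliderAt p v

/-- Two nodes are adjacent if they are joined by some edge. -/
def adjacent (G : MixedGraph V) (a b : V) : Prop :=
  G.dir a b ∨ G.dir b a ∨ G.undir a b ∨ G.undir b a ∨ G.bidir a b ∨ G.bidir b a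

/-- `v` is a definite non-collider on `p`: at least one adjacent edge is directed
out of `v`, or both adjacent edges are undirected and the neighbours of `v` on `p`
are non-adjacent. -/
def defNonColliderAt (G : MixedGraph V) (p : List (Step V)) (v : V) : Prop :=
  ∃ q ∈ stepPairs p, Step.dst q.1 = v ∧
    (Step.kind q.1 = EdgeKind.bwd ∨ Step.kind q.2 = EdgeKind.fwd ∨
      (Step.kind q.1 = EdgeKind.und ∧ Step.kind q.2 = EdgeKind.und ∧
        ¬ adjacent G (Step.src q.1) (Step.dst q.2)))

/-- Every non-endpoint node of `p` is a collider or a definite non-collider. -/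
def definiteStatus (G : MixedGraph V) (p : List (Step V)) : Prop :=
  ∀ q ∈ stepPairs p,
    (headAtDst (Step.kind q.1) ∧ headAtSrc (Step.kind q.2)) ∨
    (Step.kind q.1 = EdgeKind.bwd ∨ Step.kind q.2 = EdgeKind.fwd ∨
      (Step.kind q.1 = EdgeKind.und ∧ Step.kind q.2 = EdgeKind.und ∧
        ¬ adjacent G (Step.src q.1) (Step.dst q.2)))

/-- All steps of the path traverse directed edges forwards (a causal/directed path). -/
def allFwd (p : List (Step V)) : Prop := ∀ s ∈ p, Step.kind s = EdgeKind.fwd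

/-- `p` is a directed (causal) path in `G` from `a` to `b`. -/
def directedPathFromTo (G : MixedGraph V) (p : List (Step V)) (a b : V) : Prop :=
  IsPath G p ∧ allFwd p ∧ startsAt p a ∧ endsAt p b

/-- `p` is possibly directed: every edge is undirected or traversed forwards, and
there are no indices `i < j` with a directed edge from the `j`-th to the `i`-th node. -/
def possiblyDirected (G : MixedGraph V) (p : List (Step V)) : Prop :=
  (∀ s ∈ p, Step.kind s = EdgeKind.fwd ∨ Step.kind s = EdgeKind.und) ∧
  (pathNodes p).Pairwise (fun a b => ¬ G.dir b a)

/-- `b` is a descendant of `a`: `b = a` or a directed path from `a` to `b` exists. -/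
def descendant (G : MixedGraph V) (a b : V) : Prop :=
  a = b ∨ ∃ p, directedPathFromTo G p a b

/-- The descendants of a node set. -/
def deSet (G : MixedGraph V) (A : Set V) : Set V := {b | ∃ a ∈ A, descendant G a b}

/-- `b` is a possible descendant of `a`. -/
def possDescendant (G : MixedGraph V) (a b : V) : Prop :=
  a = b ∨ ∃ p, IsPath G p ∧ possiblyDirected G p ∧ startsAt p a ∧ endsAt p b

/-- The possible descendants of a node set. -/
def possdeSet (G : MixedGraph V) (A : Set V) : Set V := {b | ∃ a ∈ A, possDescendant G a b}

/-- `p` is a proper path from `X` to `Y`: only its first node lies in `X`. -/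
def properFromTo (G : MixedGraph V) (p : List (Step V)) (X Y : Set V) : Prop :=
  IsPath G p ∧ (∃ a ∈ X, startsAt p a) ∧ (∃ b ∈ Y, endsAt p b) ∧
    ∀ v ∈ (pathNodes p).tail, v ∉ X

/-- The causal nodes: nodes on proper directed paths from `X` to `Y`, excluding `X`. -/
def cn (G : MixedGraph V) (X Y : Set V) : Set V :=
  {v | v ∉ X ∧ ∃ p, properFromTo G p X Y ∧ allFwd p ∧ v ∈ pathNodes p}

/-- The possibly causal nodes: nodes on proper possibly directed paths from `X` to `Y`,
excluding `X`. -/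
def posscn (G : MixedGraph V) (X Y : Set V) : Set V :=
  {v | v ∉ X ∧ ∃ p, properFromTo G p X Y ∧ possiblyDirected G p ∧ v ∈ pathNodes p}

/-- The forbidden set for DAG-like graphs: `de(cn(X,Y,G),G) ∪ X`. -/
def forbD (G : MixedGraph V) (X Y : Set V) : Set V := deSet G (cn G X Y) ∪ X

/-- The forbidden set for maxPDAGs: `possde(posscn(X,Y,G),G) ∪ X`. -/
def forbP (G : MixedGraph V) (X Y : Set V) : Set V := possdeSet G (posscn G X Y) ∪ X

/-- Parents of a node set (via directed edges). -/
def paSet (G : MixedGraph V) (A : Set V) : Set V := {w | ∃ a ∈ A, G.dir w a}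

/-- The O-set for DAG-like graphs: `pa(cn(X,Y,G),G) \ forb(X,Y,G)`. -/
def OsetD (G : MixedGraph V) (X Y : Set V) : Set V := paSet G (cn G X Y) \ forbD G X Y

/-- The O-set for maxPDAGs: `pa(cn(X,Y,G),G) \ forb(X,Y,G)`. -/
def OsetP (G : MixedGraph V) (X Y : Set V) : Set V := paSet G (cn G X Y) \ forbP G X Y

/-- `v` is an ancestor (via directed paths) of some node of `C`. -/
def ancestorOfSome (G : MixedGraph V) (v : V) (C : Set V) : Prop :=
  ∃ c ∈ C, descendant G v c

/-- The path `p` is blocked by `C`: it contains a non-collider in `C` or a collider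
that is not an ancestor of any node of `C`. -/
def blocked (G : MixedGraph V) (p : List (Step V)) (C : Set V) : Prop :=
  (∃ v ∈ C, nonColliderAt p v) ∨ (∃ v, colliderAt p v ∧ ¬ ancestorOfSome G v C)

/-- The definite-status path `p` is blocked by `C`: it contains a definite non-collider
in `C` or a collider that is not an ancestor of any node of `C`. -/
def blockedDef (G : MixedGraph V) (p : List (Step V)) (C : Set V) : Prop :=
  (∃ v ∈ C, defNonColliderAt G p v) ∨ (∃ v, colliderAt p v ∧ ¬ ancestorOfSome G v C)

/-- Generalised adjustment criterion for DAGs/ADMGs: `Z` is disjoint from `X ∪ Y` and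
from the forbidden set, and every proper non-causal path from `X` to `Y` is blocked. -/
def validAdjDAG (G : MixedGraph V) (X Y Z : Set V) : Prop :=
  Z ∩ (X ∪ Y) = ∅ ∧ Z ∩ forbD G X Y = ∅ ∧
  ∀ p, properFromTo G p X Y → ¬ allFwd p → blocked G p Z

/-- `G` is amenable relative to `(X,Y)`: every proper possibly directed path from `X`
to `Y` starts with a directed edge out of `X`. -/
def amenable (G : MixedGraph V) (X Y : Set V) : Prop :=
  ∀ p, properFromTo G p X Y → possiblyDirected G p →
    ∃ s rest, p = s :: rest ∧ Step.kind s = EdgeKind.fwd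

/-- Generalised adjustment criterion for maxPDAGs: `Z` is disjoint from `X ∪ Y`,
`G` is amenable relative to `(X,Y)`, `Z` avoids the forbidden set, and every proper
non-causal definite-status path from `X` to `Y` is blocked by `Z`. -/
def validAdjMax (G : MixedGraph V) (X Y Z : Set V) : Prop :=
  Z ∩ (X ∪ Y) = ∅ ∧ amenable G X Y ∧ Z ∩ forbP G X Y = ∅ ∧
  ∀ p, properFromTo G p X Y → definiteStatus G p → ¬ possiblyDirected G p →
    blockedDef G p Z

/-- A PDAG: a simple graph with only directed and undirected edges and
no directed cycles. -/
structure IsPDAG (G : MixedGraph V) : Prop where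
  no_bidir : ∀ a b, ¬ G.bidir a b
  undir_symm : ∀ a b, G.undir a b → G.undir b a
  dir_irrefl : ∀ a, ¬ G.dir a a
  undir_irrefl : ∀ a, ¬ G.undir a a
  simple_dd : ∀ a b, G.dir a b → ¬ G.dir b a
  simple_du : ∀ a b, G.dir a b → ¬ G.undir a b
  acyclic : ∀ a b, (∃ p, directedPathFromTo G p a b) → ¬ G.dir b a

/-- A DAG: a PDAG without undirected edges. -/
structure IsDAG (G : MixedGraph V) extends IsPDAG G : Prop where
  no_undir : ∀ a b, ¬ G.undir a b

/-- A maximally oriented PDAG: a PDAG closed under Meek's rules R1–R4. -/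
structure IsMaxPDAG (G : MixedGraph V) extends IsPDAG G : Prop where
  meek1 : ∀ a b c, G.dir a b → G.undir b c → ¬ adjacent G a c → G.dir b c
  meek2 : ∀ a b c, G.dir a b → G.dir b c → G.undir a c → G.dir a c
  meek3 : ∀ a b c d, G.undir a b → G.undir a c → G.undir a d → G.dir b d → G.dir c d →
      ¬ adjacent G b c → G.dir a d
  meek4 : ∀ a b c d, G.undir a b → G.dir a c → G.undir b c → G.dir c d → G.undir b d →
      G.dir b d

/-- The first edge of the path has an arrowhead at the first node. -/
def startsWithArrowIn (p : List (Step V)) : Prop :=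
  ∃ s rest, p = s :: rest ∧ headAtSrc (Step.kind s)

/-- The last edge of the path has an arrowhead at the last node. -/
def endsWithArrowIn (p : List (Step V)) : Prop :=
  ∃ s rest, p = rest ++ [s] ∧ headAtDst (Step.kind s)

/-- Projection of `G` over the node set `F`: the graph on the nodes outside `F` with
(i) a directed edge `a → b` iff `G` has a directed path from `a` to `b` with all
non-endpoint nodes in `F`; (ii) a bi-directed edge `a ↔ b` iff `G` has a path with
at least one non-endpoint node, of the form `a ← ⋯ → b`, on which every non-endpoint
node is a non-collider and lies in `F`; (iii) an undirected edge `a − b` iff `G` has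
the undirected edge `a − b`. -/
def forbProjection (G : MixedGraph V) (F : Set V) : MixedGraph V where
  dir a b := a ∉ F ∧ b ∉ F ∧
    ∃ p, directedPathFromTo G p a b ∧ ∀ v ∈ interiorNodes p, v ∈ F
  bidir a b := a ∉ F ∧ b ∉ F ∧
    ∃ p, IsPath G p ∧ startsAt p a ∧ endsAt p b ∧ interiorNodes p ≠ [] ∧
      startsWithArrowIn p ∧ endsWithArrowIn p ∧
      ∀ v ∈ interiorNodes p, v ∈ F ∧ ¬ colliderAt p v
  undir a b := a ∉ F ∧ b ∉ F ∧ G.undir a b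

/-- The forbidden projection of a DAG `D` with respect to `(X,Y)`:
the latent projection over `forb(X,Y,D) \ (X ∪ Y)`. -/
def dagProj (D : MixedGraph V) (X Y : Set V) : MixedGraph V :=
  forbProjection D (forbD D X Y \ (X ∪ Y))

/-- The forbidden projection of a maxPDAG `G` with respect to `(X,Y)`:
the projection over `forb(X,Y,G) \ (X ∪ Y)`. -/
def maxProj (G : MixedGraph V) (X Y : Set V) : MixedGraph V :=
  forbProjection G (forbP G X Y \ (X ∪ Y))

/-- `A` and `B` are d-separated given `C` in `G`: every path between a node of `A`
and a node of `B` is blocked by `C`. -/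
def dSep (G : MixedGraph V) (A B C : Set V) : Prop :=
  ∀ p a b, a ∈ A → b ∈ B → IsPath G p → startsAt p a → endsAt p b → blocked G p C

/-- A v-structure `a → b ← c` with `a`, `c` non-adjacent. -/
def vStructure (G : MixedGraph V) (a b c : V) : Prop :=
  a ≠ c ∧ G.dir a b ∧ G.dir c b ∧ ¬ adjacent G a c

/-- The DAG `D` is represented by the maxPDAG `G` (i.e. `D ∈ [G]`): `D` is a DAG
with the same adjacencies and v-structures as `G`, and every directed edge of `G`
occurs in `D` with the same orientation. -/
def represents (G D : MixedGraph V) : Prop :=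
  IsDAG D ∧ (∀ a b, adjacent G a b ↔ adjacent D a b) ∧
  (∀ a b c, vStructure G a b c ↔ vStructure D a b c) ∧
  (∀ a b, G.dir a b → D.dir a b)

/-- One step of the pruning procedure: remove from `Z` a node `z` such that `Y` is
d-separated from `z` given `{X} ∪ (Z \ {z})`. -/
def pruneStep (G : MixedGraph V) (X Y : V) (Z Z' : Set V) : Prop :=
  ∃ z ∈ Z, dSep G {Y} {z} ({X} ∪ (Z \ {z})) ∧ Z' = Z \ {z}

/-- `Z'` is a possible result of the pruning procedure started at `Z`: it is reachable
by pruning steps and no further node can be removed. -/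
def pruneResult (G : MixedGraph V) (X Y : V) (Z Z' : Set V) : Prop :=
  Relation.ReflTransGen (pruneStep G X Y) Z Z' ∧
  ∀ z ∈ Z', ¬ dSep G {Y} {z} ({X} ∪ (Z' \ {z}))

end Causal

/-!
Let `D` be the set of possible descendants of possibly causal nodes and `N` its part outside `X`.
Every possibly causal node starts a *straight* walk to `Y` inside `N`: undirected and unshielded
first, directed afterwards. Meek's rules push straight walks along the edges of a possibly directed
path: each node of `D` that is reached starts such a walk itself or lies on a directed walk through
`N` coming from a node `h` that does. If this arrived at some `x ∈ X`, then either
`x ← ⋯ ← h − ⋯ → Y` would be a non-causal path of definite status without colliders and with all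
later nodes forbidden, which no valid adjustment set can block, or `x − h − ⋯ → Y` would contradict
amenability. Hence `D` avoids `X`. As `D` is closed under children, the only child of a projected
node that is not itself projected is `Y`, so the two ends of a bi-directed edge would both be `Y`.

Without bi-directed edges, the projection over any set inherits acyclicity and Meek's rules, because
in a maxPDAG `a → ⋯ → b − c` implies `a → ⋯ → c`, through an initial segment of the same walk, or
`a − c`.
-/

namespace Causal

section Lists

variable {α : Type*} {l l' : List α}

lemma exists_cons_suffix_of_mem {w : α} (hw : w ∈ l) : ∃ l', w :: l' <:+ l := by
  obtain ⟨s, t, rfl⟩ := List.append_of_mem hw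
  exact ⟨t, s, rfl⟩

lemma exists_cons_suffix_forall_not {P : α → Prop} (h : ∃ w ∈ l, P w) :
    ∃ w l', w :: l' <:+ l ∧ P w ∧ ∀ c ∈ l', ¬ P c := by
  induction l with
  | nil => simp at h
  | cons a l ih =>
    by_cases hl : ∃ w ∈ l, P w
    · obtain ⟨w, l', hsuff, hw, hl'⟩ := ih hl
      exact ⟨w, l', hsuff.trans (List.suffix_cons a l), hw, hl'⟩
    · push Not at hl
      obtain ⟨w, hw, hPw⟩ := h
      rcases List.mem_cons.1 hw with rfl | hw
      · exact ⟨w, l, List.suffix_rfl, hPw, hl⟩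
      · exact absurd hPw (hl w hw)

lemma getLast?_eq_of_suffix (h : l' <:+ l) (hne : l' ≠ []) : l'.getLast? = l.getLast? := by
  obtain ⟨t, rfl⟩ := h
  rw [List.getLast?_append_of_ne_nil _ hne]

lemma isChain_concat_iff {R : α → α → Prop} {a b c : α} :
    (a :: (l ++ [b] ++ [c])).IsChain R ↔ (a :: (l ++ [b])).IsChain R ∧ R b c := by
  simp

end Lists

variable {V : Type*} {G : MixedGraph V} {X F N Z : Set V} {a b c d v y : V} {l : List V}
  {p : List (Step V)}

section Paths

lemma tail_pathNodes (p : List (Step V)) : (pathNodes p).tail = p.map Step.dst := by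
  cases p <;> rfl

lemma interiorNodes_eq_dropLast (p : List (Step V)) :
    interiorNodes p = (p.map Step.dst).dropLast := by
  rw [interiorNodes, List.drop_one, tail_pathNodes]

lemma getLast?_pathNodes (p : List (Step V)) :
    (pathNodes p).getLast? = (p.map Step.dst).getLast? := by
  cases p <;> simp [pathNodes]

lemma pathNodes_eq_cons_append (hp : p ≠ []) (ha : startsAt p a) (hb : endsAt p b) :
    pathNodes p = a :: (interiorNodes p ++ [b]) := by
  rw [endsAt, getLast?_pathNodes] at hb
  rw [interiorNodes_eq_dropLast, List.dropLast_append_getLast? b hb]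
  cases p with
  | nil => exact absurd rfl hp
  | cons s p => simpa [startsAt, pathNodes] using ha

lemma interiorNodes_eq_tail (hchain : p.IsChain fun s t => Step.dst s = Step.src t) :
    interiorNodes p = (p.map Step.src).tail := by
  rw [interiorNodes_eq_dropLast]
  induction p with
  | nil => rfl
  | cons s p ih =>
    cases p with
    | nil => rfl
    | cons t p =>
      rw [List.isChain_cons_cons] at hchain
      have := ih hchain.2
      simp_all

lemma isChain_pathNodes {R : V → V → Prop}
    (hchain : p.IsChain fun s t => Step.dst s = Step.src t)
    (hR : ∀ s ∈ p, R (Step.src s) (Step.dst s)) : (pathNodes p).IsChain R := by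
  induction p with
  | nil => exact .nil
  | cons s p ih =>
    cases p with
    | nil => simpa [pathNodes] using hR
    | cons t p =>
      rw [List.isChain_cons_cons] at hchain
      have hrest := ih hchain.2 fun s hs => hR s (List.mem_cons_of_mem _ hs)
      have hs := hR s List.mem_cons_self
      rw [pathNodes, ← hchain.1] at hrest
      exact List.isChain_cons_cons.2 ⟨hs, hrest⟩

open Classical in
/-- The kind of the edge traversed when stepping from `a` to `b` in a graph without bi-directed
edges; non-adjacent nodes get the junk value `und`. -/
noncomputable def edgeKind (G : MixedGraph V) (a b : V) : EdgeKind :=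
  if G.dir a b then .fwd else if G.dir b a then .bwd else .und

lemma edgeKind_of_dir (h : G.dir a b) : edgeKind G a b = .fwd := if_pos h

lemma dir_of_edgeKind_eq_fwd (h : edgeKind G a b = .fwd) : G.dir a b := by
  unfold edgeKind at h
  split_ifs at h with hab
  exact hab

lemma IsPDAG.edgeKind_of_dir_rev (hG : IsPDAG G) (h : G.dir b a) : edgeKind G a b = .bwd := by
  rw [edgeKind, if_neg (hG.simple_dd b a h), if_pos h]

lemma IsPDAG.edgeKind_of_undir (hG : IsPDAG G) (h : G.undir a b) : edgeKind G a b = .und := by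
  rw [edgeKind, if_neg fun hab => hG.simple_du a b hab h,
    if_neg fun hba => hG.simple_du b a hba (hG.undir_symm a b h)]

lemma IsPDAG.adjacent_iff (hG : IsPDAG G) :
    adjacent G a b ↔ G.dir a b ∨ G.dir b a ∨ G.undir a b := by
  have := hG.no_bidir
  have := hG.undir_symm b a
  unfold adjacent
  tauto

lemma IsPDAG.stepOK_edgeKind (hG : IsPDAG G) (h : adjacent G a b) :
    stepOK G (a, edgeKind G a b, b) := by
  rcases hG.adjacent_iff.1 h with h | h | h
  · rw [edgeKind_of_dir h]
    exact h
  · rw [hG.edgeKind_of_dir_rev h]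
    exact h
  · rw [hG.edgeKind_of_undir h]
    exact .inl h

/-- The sequence of steps visiting the given nodes in order, so that paths in a simple graph can
be handled as lists of nodes. -/
noncomputable def pathOf (G : MixedGraph V) : List V → List (Step V)
  | [] => []
  | [_] => []
  | a :: b :: l => (a, edgeKind G a b, b) :: pathOf G (b :: l)

lemma map_dst_pathOf (G : MixedGraph V) (a : V) (l : List V) :
    (pathOf G (a :: l)).map Step.dst = l := by
  induction l generalizing a with
  | nil => rfl
  | cons b l ih => rw [pathOf, List.map_cons, ih]; rfl

lemma pathNodes_pathOf (hl : l ≠ []) : pathNodes (pathOf G (a :: l)) = a :: l := by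
  cases l with
  | nil => exact absurd rfl hl
  | cons b l => simp [pathOf, pathNodes, map_dst_pathOf, Step.src, Step.dst]

lemma startsAt_pathOf (hl : l ≠ []) : startsAt (pathOf G (a :: l)) a := by
  rw [startsAt, pathNodes_pathOf hl, List.head?_cons]

lemma endsAt_pathOf (hl : l.getLast? = some b) : endsAt (pathOf G (a :: l)) b := by
  rw [endsAt, getLast?_pathNodes, map_dst_pathOf, hl]

lemma forall_mem_pathOf {P : Step V → Prop}
    (h : l.IsChain fun a b => P (a, edgeKind G a b, b)) : ∀ s ∈ pathOf G l, P s := by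
  induction l with
  | nil => simp [pathOf]
  | cons a l ih =>
    cases l with
    | nil => simp [pathOf]
    | cons b l =>
      rw [List.isChain_cons_cons] at h
      exact List.forall_mem_cons.2 ⟨h.1, ih h.2⟩

lemma isChain_pathOf (G : MixedGraph V) (l : List V) :
    (pathOf G l).IsChain (fun s t => Step.dst s = Step.src t) := by
  induction l with
  | nil => exact .nil
  | cons a l ih =>
    match l with
    | [] => exact .nil
    | [b] => exact .singleton _
    | b :: c :: l => exact List.isChain_cons_cons.2 ⟨rfl, ih⟩

lemma IsPDAG.isPath_pathOf (hG : IsPDAG G) (hl : l ≠ [])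
    (hadj : (a :: l).IsChain (adjacent G)) (hnodup : (a :: l).Nodup) :
    IsPath G (pathOf G (a :: l)) where
  nonempty h := by simpa [h, pathNodes] using pathNodes_pathOf (G := G) (a := a) hl
  valid := forall_mem_pathOf (hadj.imp fun _ _ => hG.stepOK_edgeKind)
  chain := isChain_pathOf G _
  nodup := by rwa [pathNodes_pathOf hl]

end Paths

section DirectedPaths

open Relation (TransGen)

lemma IsPDAG.directedPathFromTo_pathOf (hG : IsPDAG G)
    (hchain : (a :: (l ++ [b])).IsChain G.dir) (hnodup : (a :: (l ++ [b])).Nodup) :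
    directedPathFromTo G (pathOf G (a :: (l ++ [b]))) a b :=
  ⟨hG.isPath_pathOf (by simp) (hchain.imp fun _ _ => .inl) hnodup,
    forall_mem_pathOf (hchain.imp fun _ _ => edgeKind_of_dir), startsAt_pathOf (by simp),
    endsAt_pathOf (by simp)⟩

lemma directedPathFromTo.isChain (h : directedPathFromTo G p a b) :
    (a :: (interiorNodes p ++ [b])).IsChain G.dir := by
  obtain ⟨hp, hfwd, ha, hb⟩ := h
  rw [← pathNodes_eq_cons_append hp.nonempty ha hb]
  refine isChain_pathNodes hp.chain fun s hs => ?_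
  have hok := hp.valid s hs
  rwa [stepOK, hfwd s hs] at hok

lemma IsPDAG.nodup_of_isChain_dir (hG : IsPDAG G) (hl : l.IsChain G.dir) : l.Nodup := by
  induction l with
  | nil => exact .nil
  | cons a l ih =>
    have hnodup := ih hl.tail
    refine List.nodup_cons.2 ⟨fun ha => ?_, hnodup⟩
    obtain ⟨s, t, rfl⟩ := List.append_of_mem ha
    have hcycle : (a :: (s ++ [a])).IsChain G.dir := hl.infix ⟨[], t, by simp⟩
    rcases List.eq_nil_or_concat' s with rfl | ⟨s, b, rfl⟩
    · exact hG.dir_irrefl a (by simpa using hcycle)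
    · obtain ⟨hpath, hba⟩ := isChain_concat_iff.1 hcycle
      refine hG.acyclic a b ⟨_, hG.directedPathFromTo_pathOf hpath ?_⟩ hba
      exact (List.nodup_middle.1 hnodup).sublist (by simp)

lemma IsPDAG.not_transGen_self (hG : IsPDAG G) (a : V) : ¬ TransGen G.dir a a := by
  intro h
  obtain ⟨b, hab, hba⟩ := TransGen.head'_iff.1 h
  obtain ⟨l, hl, hlast⟩ := List.exists_isChain_cons_of_relationReflTransGen hba
  have hnodup := hG.nodup_of_isChain_dir (List.isChain_cons_cons.2 ⟨hab, hl⟩)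
  exact (List.nodup_cons.1 hnodup).1 (hlast ▸ List.getLast_mem _)

/-- `DirVia G F a b`: there is a directed walk from `a` to `b` all of whose intermediate nodes
lie in `F`; for `a, b ∉ F` these are the directed edges of the projection of `G` over `F`. -/
inductive DirVia (G : MixedGraph V) (F : Set V) (a : V) : V → Prop
  | single {b : V} (hab : G.dir a b) : DirVia G F a b
  | tail {f b : V} (haf : DirVia G F a f) (hf : f ∈ F) (hfb : G.dir f b) : DirVia G F a b

lemma DirVia.transGen (h : DirVia G F a b) : TransGen G.dir a b := by
  induction h with
  | single hab => exact .single hab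
  | tail _ _ hfb ih => exact ih.tail hfb

lemma dirVia_univ_of_transGen (h : TransGen G.dir a b) : DirVia G Set.univ a b := by
  induction h with
  | single hab => exact .single hab
  | tail _ hfb ih => exact ih.tail trivial hfb

lemma dirVia_iff_exists_isChain :
    DirVia G F a b ↔ ∃ l, (a :: (l ++ [b])).IsChain G.dir ∧ ∀ v ∈ l, v ∈ F := by
  constructor
  · intro h
    induction h with
    | single hab => exact ⟨[], by simpa using hab, by simp⟩
    | @tail f b _ hf hfb ih =>
      obtain ⟨l, hl, hlF⟩ := ih
      exact ⟨l ++ [f], isChain_concat_iff.2 ⟨hl, hfb⟩,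
        by simpa [or_imp, forall_and] using ⟨hlF, hf⟩⟩
  · rintro ⟨l, hl, hlF⟩
    induction l using List.reverseRecOn generalizing b with
    | nil => exact .single (by simpa using hl)
    | append_singleton l f ih =>
      obtain ⟨hlf, hfb⟩ := isChain_concat_iff.1 hl
      exact (ih hlf fun v hv => hlF v (by simp [hv])).tail (hlF f (by simp)) hfb

lemma directedPathFromTo.transGen (h : directedPathFromTo G p a b) : TransGen G.dir a b :=
  (dirVia_iff_exists_isChain (F := Set.univ).2 ⟨_, h.isChain, by simp⟩).transGen

lemma IsPDAG.forbProjection_dir_iff (hG : IsPDAG G) :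
    (forbProjection G F).dir a b ↔ a ∉ F ∧ b ∉ F ∧ DirVia G F a b := by
  refine and_congr_right' (and_congr_right' ⟨?_, fun h => ?_⟩)
  · rintro ⟨p, hp, hpF⟩
    exact dirVia_iff_exists_isChain.2 ⟨_, hp.isChain, hpF⟩
  · obtain ⟨l, hl, hlF⟩ := dirVia_iff_exists_isChain.1 h
    refine ⟨_, hG.directedPathFromTo_pathOf hl (hG.nodup_of_isChain_dir hl), ?_⟩
    rwa [interiorNodes_eq_dropLast, map_dst_pathOf, List.dropLast_concat]

end DirectedPaths

section MeekRules

open Relation (TransGen)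

lemma IsMaxPDAG.dir_or_undir_of_dir_of_undir (hG : IsMaxPDAG G) (hab : G.dir a b)
    (hbc : G.undir b c) : G.dir a c ∨ G.undir a c := by
  by_contra! hac
  have hadj : adjacent G a c := by
    by_contra hnadj
    exact hG.simple_du b c (hG.meek1 a b c hab hbc hnadj) hbc
  rcases hG.adjacent_iff.1 hadj with h | h | h
  · exact hac.1 h
  · exact hG.simple_du c b (hG.meek2 c a b h hab (hG.undir_symm b c hbc)) (hG.undir_symm b c hbc)
  · exact hac.2 h

lemma DirVia.dirVia_or_undir (hG : IsMaxPDAG G) (hab : DirVia G F a b) (hbc : G.undir b c) :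
    DirVia G F a c ∨ G.undir a c := by
  induction hab generalizing c with
  | single hab => exact (hG.dir_or_undir_of_dir_of_undir hab hbc).imp_left .single
  | tail haf hf hfb ih =>
    rcases hG.dir_or_undir_of_dir_of_undir hfb hbc with hfc | hfc
    · exact .inl (haf.tail hf hfc)
    · exact ih hfc

lemma IsMaxPDAG.transGen_or_undir (hG : IsMaxPDAG G) (hab : TransGen G.dir a b)
    (hbc : G.undir b c) : TransGen G.dir a c ∨ G.undir a c :=
  ((dirVia_univ_of_transGen hab).dirVia_or_undir hG hbc).imp_left DirVia.transGen

lemma IsMaxPDAG.not_undir_of_transGen (hG : IsMaxPDAG G) (h : TransGen G.dir a b) :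
    ¬ G.undir a b := fun hab =>
  (hG.transGen_or_undir h (hG.undir_symm a b hab)).elim (hG.not_transGen_self a)
    (hG.undir_irrefl a)

lemma IsMaxPDAG.dir_of_transGen_of_undir_of_undir (hG : IsMaxPDAG G) (hbd : TransGen G.dir b d)
    (hab : G.undir a b) (had : G.undir a d) : G.dir b d := by
  -- A walk `b → c → ⋯ → d` would force `a − c`, and then R4 would orient `a − d`.
  induction hbd using TransGen.head_induction_on with
  | single h => exact h
  | @head b c hbc hcd ih =>
    have hba := hG.undir_symm a b hab
    rcases hG.transGen_or_undir hcd (hG.undir_symm a d had) with hca | hca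
    · exact absurd hba (hG.not_undir_of_transGen (hca.head hbc))
    have hac := hG.undir_symm c a hca
    exact absurd had (hG.simple_du a d (hG.meek4 b a c d hba hbc hac (ih hac) had))

end MeekRules

section Projection

lemma IsPDAG.adjacent_forbProjection (hG : IsPDAG G) (ha : a ∉ F) (hb : b ∉ F)
    (h : adjacent G a b) : adjacent (forbProjection G F) a b := by
  rcases hG.adjacent_iff.1 h with h | h | h
  · exact .inl (hG.forbProjection_dir_iff.2 ⟨ha, hb, .single h⟩)
  · exact .inr (.inl (hG.forbProjection_dir_iff.2 ⟨hb, ha, .single h⟩))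
  · exact .inr (.inr (.inl ⟨ha, hb, h⟩))

lemma IsPDAG.transGen_of_forbProjection (hG : IsPDAG G)
    (h : (forbProjection G F).dir a b) : Relation.TransGen G.dir a b :=
  (hG.forbProjection_dir_iff.1 h).2.2.transGen

lemma IsPDAG.transGen_of_transGen_forbProjection (hG : IsPDAG G)
    (h : Relation.TransGen (forbProjection G F).dir a b) : Relation.TransGen G.dir a b :=
  Relation.TransGen.trans_induction_on h hG.transGen_of_forbProjection fun _ _ => .trans

lemma IsMaxPDAG.isPDAG_forbProjection (hG : IsMaxPDAG G)
    (hbidir : ∀ a b, ¬ (forbProjection G F).bidir a b) : IsPDAG (forbProjection G F) where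
  no_bidir := hbidir
  undir_symm a b h := ⟨h.2.1, h.1, hG.undir_symm a b h.2.2⟩
  dir_irrefl a h := hG.not_transGen_self a (hG.transGen_of_forbProjection h)
  undir_irrefl a h := hG.undir_irrefl a h.2.2
  simple_dd a _ hab hba := hG.not_transGen_self a
    ((hG.transGen_of_forbProjection hab).trans (hG.transGen_of_forbProjection hba))
  simple_du _ _ hab hab' := hG.not_undir_of_transGen (hG.transGen_of_forbProjection hab) hab'.2.2
  acyclic a _ := fun ⟨_, hp⟩ hba => hG.not_transGen_self a
    ((hG.transGen_of_transGen_forbProjection hp.transGen).trans (hG.transGen_of_forbProjection hba))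

lemma IsMaxPDAG.isMaxPDAG_forbProjection (hG : IsMaxPDAG G)
    (hbidir : ∀ a b, ¬ (forbProjection G F).bidir a b) : IsMaxPDAG (forbProjection G F) where
  toIsPDAG := hG.isPDAG_forbProjection hbidir
  meek1 a b c hab hbc hac := by
    refine absurd ?_ hac
    rcases (hG.forbProjection_dir_iff.1 hab).2.2.dirVia_or_undir hG hbc.2.2 with h | h
    · exact .inl (hG.forbProjection_dir_iff.2 ⟨hab.1, hbc.2.1, h⟩)
    · exact hG.adjacent_forbProjection hab.1 hbc.2.1 (.inr (.inr (.inl h)))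
  meek2 a b c hab hbc hac := absurd hac.2.2 <| hG.not_undir_of_transGen <|
    (hG.transGen_of_forbProjection hab).trans (hG.transGen_of_forbProjection hbc)
  meek3 a b c d hab hac had hbd hcd hbc := by
    have hbd' := hG.dir_of_transGen_of_undir_of_undir (hG.transGen_of_forbProjection hbd)
      hab.2.2 had.2.2
    have hcd' := hG.dir_of_transGen_of_undir_of_undir (hG.transGen_of_forbProjection hcd)
      hac.2.2 had.2.2
    have hnadj : ¬ adjacent G b c := mt (hG.adjacent_forbProjection hbd.1 hcd.1) hbc
    exact absurd had.2.2 <| hG.simple_du a d <|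
      hG.meek3 a b c d hab.2.2 hac.2.2 had.2.2 hbd' hcd' hnadj
  meek4 a b c d hab hac hbc hcd hbd := by
    have hcd' := hG.dir_of_transGen_of_undir_of_undir (hG.transGen_of_forbProjection hcd)
      hbc.2.2 hbd.2.2
    have hac' := hG.dir_of_transGen_of_undir_of_undir (hG.transGen_of_forbProjection hac)
      (hG.undir_symm a b hab.2.2) hbc.2.2
    exact absurd hbd.2.2 <| hG.simple_du b d <|
      hG.meek4 a b c d hab.2.2 hac' hbc.2.2 hcd' hbd.2.2

end Projection

section PossiblyDirected

/-- An edge that can be traversed from `a` to `b` by a possibly directed path. -/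
def PossEdge (G : MixedGraph V) (a b : V) : Prop := G.dir a b ∨ G.undir a b

/-- The list of nodes of a possibly directed path, allowed to be trivial. -/
structure IsPossDir (G : MixedGraph V) (l : List V) : Prop where
  isChain : l.IsChain (PossEdge G)
  nodup : l.Nodup
  pairwise : l.Pairwise fun a b => ¬ G.dir b a

lemma IsPossDir.cons (hl : IsPossDir G (b :: l)) (hab : PossEdge G a b) (ha : a ∉ b :: l)
    (hdir : ∀ w ∈ b :: l, ¬ G.dir w a) : IsPossDir G (a :: b :: l) where
  isChain := List.isChain_cons_cons.2 ⟨hab, hl.isChain⟩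
  nodup := List.nodup_cons.2 ⟨ha, hl.nodup⟩
  pairwise := List.pairwise_cons.2 ⟨hdir, hl.pairwise⟩

lemma IsPossDir.infix {l' : List V} (hl : IsPossDir G l) (h : l' <:+: l) : IsPossDir G l' where
  isChain := hl.isChain.infix h
  nodup := hl.nodup.sublist h.sublist
  pairwise := hl.pairwise.sublist h.sublist

lemma PossEdge.adjacent (h : PossEdge G a b) : adjacent G a b :=
  h.elim .inl fun h => .inr (.inr (.inl h))

lemma IsPDAG.isPossDir_pathNodes (hG : IsPDAG G) (hp : IsPath G p) (hposs : possiblyDirected G p) :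
    IsPossDir G (pathNodes p) where
  isChain := isChain_pathNodes hp.chain fun s hs => by
    have hok := hp.valid s hs
    rcases hposs.1 s hs with h | h <;> rw [stepOK, h] at hok
    · exact .inl hok
    · exact .inr (hok.elim id (hG.undir_symm _ _))
  nodup := hp.nodup
  pairwise := hposs.2

lemma IsPDAG.edgeKind_of_possEdge (hG : IsPDAG G) (h : PossEdge G a b) :
    edgeKind G a b = .fwd ∨ edgeKind G a b = .und :=
  h.imp edgeKind_of_dir hG.edgeKind_of_undir

lemma IsPDAG.isPath_and_possiblyDirected_pathOf (hG : IsPDAG G) (hl : l ≠ [])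
    (h : IsPossDir G (a :: l)) :
    IsPath G (pathOf G (a :: l)) ∧ possiblyDirected G (pathOf G (a :: l)) := by
  refine ⟨hG.isPath_pathOf hl (h.isChain.imp fun _ _ => PossEdge.adjacent) h.nodup,
    forall_mem_pathOf (h.isChain.imp fun _ _ => hG.edgeKind_of_possEdge), ?_⟩
  rw [pathNodes_pathOf hl]
  exact h.pairwise

lemma IsPDAG.possDescendant_iff (hG : IsPDAG G) :
    possDescendant G a b ↔ ∃ l, IsPossDir G (a :: l) ∧ (a :: l).getLast? = some b := by
  constructor
  · rintro (rfl | ⟨p, hp, hposs, ha, hb⟩)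
    · exact ⟨[], ⟨.singleton _, List.nodup_singleton a, List.pairwise_singleton _ a⟩, rfl⟩
    · have hnodes := pathNodes_eq_cons_append hp.nonempty ha hb
      have h := hG.isPossDir_pathNodes hp hposs
      rw [hnodes] at h
      exact ⟨_, h, by rw [← hnodes]; exact hb⟩
  · rintro ⟨l, hl, hb⟩
    rcases eq_or_ne l [] with rfl | hne
    · exact .inl (by simpa using hb)
    · obtain ⟨hp, hposs⟩ := hG.isPath_and_possiblyDirected_pathOf hne hl
      refine .inr ⟨_, hp, hposs, startsAt_pathOf hne, ?_⟩
      rwa [endsAt, pathNodes_pathOf hne]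

lemma IsPDAG.possDescendant_of_mem (hG : IsPDAG G) (hl : IsPossDir G (a :: l))
    (hb : b ∈ a :: l) : possDescendant G a b := by
  rw [hG.possDescendant_iff]
  rcases List.mem_cons.1 hb with rfl | hb
  · exact ⟨[], hl.infix ⟨[], l, rfl⟩, rfl⟩
  · obtain ⟨s, t, rfl⟩ := List.append_of_mem hb
    exact ⟨s ++ [b], hl.infix ⟨[], t, by simp⟩,
      by rw [← List.cons_append, List.getLast?_concat]⟩

lemma IsPDAG.mem_posscn_iff (hG : IsPDAG G) :
    v ∈ posscn G X {y} ↔ ∃ x ∈ X, ∃ l, IsPossDir G (x :: l) ∧ (∀ w ∈ l, w ∉ X) ∧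
      l.getLast? = some y ∧ v ∈ l := by
  constructor
  · rintro ⟨hv, p, ⟨hp, ⟨x, hx, hxp⟩, ⟨_, rfl, hyp⟩, hpX⟩, hposs, hvp⟩
    have hnodes := pathNodes_eq_cons_append hp.nonempty hxp hyp
    have h := hG.isPossDir_pathNodes hp hposs
    rw [hnodes] at h hvp hpX
    refine ⟨x, hx, _, h, hpX, by simp, (List.mem_cons.1 hvp).resolve_left ?_⟩
    exact fun hvx => hv (hvx ▸ hx)
  · rintro ⟨x, hx, l, hl, hlX, hy, hv⟩
    have hne : l ≠ [] := List.ne_nil_of_mem hv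
    obtain ⟨hp, hposs⟩ := hG.isPath_and_possiblyDirected_pathOf hne hl
    refine ⟨hlX v hv, _, ⟨hp, ⟨x, hx, startsAt_pathOf hne⟩, ⟨y, rfl, endsAt_pathOf hy⟩, ?_⟩,
      hposs, ?_⟩
    · rwa [pathNodes_pathOf hne]
    · rw [pathNodes_pathOf hne]
      exact List.mem_cons_of_mem x hv

lemma amenable.dir_of_isPossDir (h : amenable G X {y}) (hG : IsPDAG G) {x : V} (hx : x ∈ X)
    (hl : IsPossDir G (x :: a :: l)) (hlX : ∀ w ∈ a :: l, w ∉ X)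
    (hy : (a :: l).getLast? = some y) : G.dir x a := by
  have hne : a :: l ≠ [] := List.cons_ne_nil a l
  obtain ⟨hp, hposs⟩ := hG.isPath_and_possiblyDirected_pathOf hne hl
  obtain ⟨s, rest, heq, hs⟩ := h _ ⟨hp, ⟨x, hx, startsAt_pathOf hne⟩, ⟨y, rfl, endsAt_pathOf hy⟩,
    by rwa [pathNodes_pathOf hne]⟩ hposs
  obtain ⟨rfl, -⟩ := List.cons.inj heq
  exact dir_of_edgeKind_eq_fwd hs

end PossiblyDirected

section Straight

open Relation (TransGen ReflTransGen)

/-- The list of nodes of a walk that runs through undirected edges first and directed edges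
afterwards, and along which a node left by an undirected edge is adjacent to no later node except
its successor. -/
inductive IsStraight (G : MixedGraph V) : List V → Prop
  | directed {l : List V} (hl : l.IsChain G.dir) : IsStraight G l
  | cons_undir {a b : V} {l : List V} (hab : G.undir a b)
      (hl : ∀ c ∈ l, a ≠ c ∧ ¬ adjacent G a c) (h : IsStraight G (b :: l)) :
      IsStraight G (a :: b :: l)

lemma IsStraight.of_suffix {l' : List V} (h : IsStraight G l) (hl' : l' <:+ l) :
    IsStraight G l' := by
  induction h with
  | directed hl => exact .directed (hl.suffix hl')
  | cons_undir hab hl h ih =>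
    rcases List.suffix_cons_iff.1 hl' with rfl | hl'
    · exact .cons_undir hab hl h
    · exact ih hl'

lemma IsStraight.isChain (h : IsStraight G l) : l.IsChain (PossEdge G) := by
  induction h with
  | directed hl => exact hl.imp fun _ _ => .inl
  | cons_undir hab _ _ ih => exact List.isChain_cons_cons.2 ⟨.inr hab, ih⟩

lemma IsStraight.pairwise (hG : IsMaxPDAG G) (h : IsStraight G l) :
    l.Pairwise fun a b => ¬ ReflTransGen G.dir b a := by
  induction h with
  | directed hl =>
    have hpair := List.isChain_iff_pairwise.1 (hl.imp fun _ _ => TransGen.single)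
    exact hpair.imp fun hab hba => hG.not_transGen_self _ (.trans_left hab hba)
  | @cons_undir a b l hab hl h ih =>
    refine List.pairwise_cons.2 ⟨fun c hc hca => ?_, ih⟩
    rcases List.mem_cons.1 hc with rfl | hc
    · rcases Relation.reflTransGen_iff_eq_or_transGen.1 hca with rfl | hca
      · exact hG.undir_irrefl _ hab
      · exact hG.not_undir_of_transGen hca (hG.undir_symm _ _ hab)
    · have hca := (Relation.reflTransGen_iff_eq_or_transGen.1 hca).resolve_left (hl c hc).1
      rcases hG.transGen_or_undir hca hab with hcb | hcb
      · exact (List.pairwise_cons.1 ih).1 c hc hcb.to_reflTransGen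
      · have := hG.dir_of_transGen_of_undir_of_undir hca (hG.undir_symm c b hcb)
          (hG.undir_symm a b hab)
        exact (hl c hc).2 (.inr (.inl this))

lemma isPossDir_of_pairwise_not_reflTransGen (hl : l.IsChain (PossEdge G))
    (h : l.Pairwise fun a b => ¬ ReflTransGen G.dir b a) : IsPossDir G l where
  isChain := hl
  nodup := h.imp fun hba hab => hba (by rw [hab])
  pairwise := h.imp fun hba hab => hba (.single hab)

lemma IsStraight.isPossDir (hG : IsMaxPDAG G) (h : IsStraight G l) : IsPossDir G l :=
  isPossDir_of_pairwise_not_reflTransGen h.isChain (h.pairwise hG)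

lemma IsStraight.isChain_dir_of_dir (hG : IsMaxPDAG G) {w : V} (h : IsStraight G (w :: l))
    (haw : G.dir a w) (hl : ∀ c ∈ l, ¬ adjacent G a c) : (w :: l).IsChain G.dir := by
  cases h with
  | directed hl => exact hl
  | @cons_undir _ c l hwc _ _ =>
    have := hG.meek1 a w c haw hwc (hl c List.mem_cons_self)
    exact absurd hwc (hG.simple_du w c this)

lemma IsStraight.exists_cons (hG : IsMaxPDAG G) (h : IsStraight G (b :: l)) (hab : PossEdge G a b)
    (hne : a ∉ b :: l) (hdir : ∀ w ∈ b :: l, ¬ G.dir w a) :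
    ∃ l', l' <:+ b :: l ∧ l' ≠ [] ∧ IsStraight G (a :: l') := by
  obtain ⟨w, l', hsuff, haw, hl'⟩ := exists_cons_suffix_forall_not (P := adjacent G a)
    ⟨b, List.mem_cons_self, hab.adjacent⟩
  have hw : w ∈ b :: l := hsuff.mem List.mem_cons_self
  refine ⟨w :: l', hsuff, List.cons_ne_nil w l', ?_⟩
  rcases hG.adjacent_iff.1 haw with haw | hwa | haw
  · exact .directed (List.isChain_cons_cons.2
      ⟨haw, (h.of_suffix hsuff).isChain_dir_of_dir hG haw hl'⟩)
  · exact absurd hwa (hdir w hw)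
  · refine .cons_undir haw (fun c hc => ⟨?_, hl' c hc⟩) (h.of_suffix hsuff)
    rintro rfl
    exact hne (hsuff.mem (List.mem_cons_of_mem w hc))

lemma IsPossDir.exists_isStraight (hG : IsMaxPDAG G) (h : IsPossDir G (a :: l)) :
    ∃ l' ⊆ l, IsStraight G (a :: l') ∧ (a :: l').getLast? = (a :: l).getLast? := by
  induction l generalizing a with
  | nil => exact ⟨[], List.Subset.refl _, .directed (.singleton a), rfl⟩
  | cons b l ih =>
    obtain ⟨m, hml, hm, hlast⟩ := ih (h.infix (List.suffix_cons a _).isInfix)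
    have hsub : b :: m ⊆ b :: l := List.cons_subset_cons b hml
    obtain ⟨l', hl', hne, hstraight⟩ := hm.exists_cons hG (List.isChain_cons_cons.1 h.isChain).1
      (fun ha => (List.nodup_cons.1 h.nodup).1 (hsub ha))
      (fun w hw => (List.pairwise_cons.1 h.pairwise).1 w (hsub hw))
    refine ⟨l', fun _ hv => hsub (hl'.subset hv), hstraight, ?_⟩
    rw [List.getLast?_cons_cons, ← hlast, ← getLast?_eq_of_suffix hl' hne]
    obtain ⟨c, l', rfl⟩ := List.exists_cons_of_ne_nil hne
    exact List.getLast?_cons_cons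

lemma IsMaxPDAG.possDescendant_of_dir (hG : IsMaxPDAG G) (hcb : possDescendant G c b)
    (hba : G.dir b a) : possDescendant G c a := by
  obtain ⟨m, hm, hmb⟩ := hG.possDescendant_iff.1 hcb
  obtain ⟨l, -, hl, hlb⟩ := hm.exists_isStraight hG
  rw [hmb] at hlb
  have hlast : ∀ w ∈ c :: l, ReflTransGen G.dir b w → w = b := by
    intro w hw hbw
    have hpair := hl.pairwise hG
    rw [← List.dropLast_append_getLast? b hlb] at hw hpair
    rcases List.mem_append.1 hw with hw | hw
    · exact absurd hbw ((List.pairwise_append.1 hpair).2.2 w hw b List.mem_cons_self)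
    · exact List.mem_singleton.1 hw
  have hchain : (c :: l ++ [a]).IsChain (PossEdge G) :=
    List.isChain_append.2 ⟨hl.isChain, .singleton a, fun w hw v hv => by
      simp_all [PossEdge]⟩
  refine hG.possDescendant_iff.2 ⟨l ++ [a], isPossDir_of_pairwise_not_reflTransGen hchain ?_, ?_⟩
  · refine List.pairwise_append.2 ⟨hl.pairwise hG, List.pairwise_singleton _ _, ?_⟩
    rintro w hw _ ha haw
    obtain rfl := List.mem_singleton.1 ha
    obtain rfl := hlast w hw (.head hba haw)
    exact hG.not_transGen_self w (.head' hba haw)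
  · rw [← List.cons_append, List.getLast?_concat]

end Straight

section Sources

/-- The nodes of `l` all lie in `N` and the last one is `y`. -/
structure LeadsTo (N : Set V) (y : V) (l : List V) : Prop where
  mem : ∀ v ∈ l, v ∈ N
  getLast? : l.getLast? = some y

lemma LeadsTo.of_suffix {l' : List V} (h : LeadsTo N y l) (hl' : l' <:+ l) (hne : l' ≠ []) :
    LeadsTo N y l' where
  mem v hv := h.mem v (hl'.mem hv)
  getLast? := (getLast?_eq_of_suffix hl' hne).trans h.getLast?

lemma LeadsTo.cons (h : LeadsTo N y l) (ha : a ∈ N) : LeadsTo N y (a :: l) where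
  mem := List.forall_mem_cons.2 ⟨ha, h.mem⟩
  getLast? := by rw [List.getLast?_cons, h.getLast?, Option.getD_some]

/-- The nodes from which a straight walk within `N` leads to `y`. -/
def straightSources (G : MixedGraph V) (N : Set V) (y : V) : Set V :=
  {h | ∃ l, IsStraight G (h :: l) ∧ LeadsTo N y (h :: l)}

lemma mem_straightSources_of_mem (hl : IsStraight G l) (hly : LeadsTo N y l) (hv : v ∈ l) :
    v ∈ straightSources G N y := by
  obtain ⟨l', hl'⟩ := exists_cons_suffix_of_mem hv
  exact ⟨l', hl.of_suffix hl', hly.of_suffix hl' (List.cons_ne_nil v l')⟩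

lemma exists_dir_or_mem_straightSources (hG : IsMaxPDAG G) (hb : b ∈ straightSources G N y)
    (hab : G.undir a b) (ha : a ∈ N) :
    (∃ w ∈ straightSources G N y, G.dir w a) ∨ a ∈ straightSources G N y := by
  obtain ⟨l, hl, hly⟩ := hb
  by_cases hal : a ∈ b :: l
  · exact .inr (mem_straightSources_of_mem hl hly hal)
  · by_cases hdir : ∃ w ∈ b :: l, G.dir w a
    · obtain ⟨w, hw, hwa⟩ := hdir
      exact .inl ⟨w, mem_straightSources_of_mem hl hly hw, hwa⟩
    · push Not at hdir
      obtain ⟨l', hl', hne, hal'⟩ := hl.exists_cons hG (.inr hab) hal hdir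
      exact .inr ⟨l', hal', (hly.of_suffix hl' hne).cons ha⟩

/-- The nodes reached by directed walks through `N` that start at a straight source. -/
def fedByStraight (G : MixedGraph V) (N : Set V) (y : V) : Set V :=
  {v | v ∈ straightSources G N y ∨ ∃ h ∈ straightSources G N y, DirVia G N h v}

lemma dirVia_or_undir_of_mem_fedByStraight (hG : IsMaxPDAG G) (ha : a ∈ fedByStraight G N y)
    (haN : a ∈ N) (hab : PossEdge G a b) :
    ∃ h ∈ straightSources G N y, DirVia G N h b ∨ G.undir b h := by
  rcases ha, hab with ⟨ha | ⟨h, hh, hha⟩, hab | hab⟩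
  · exact ⟨a, ha, .inl (.single hab)⟩
  · exact ⟨a, ha, .inr (hG.undir_symm a b hab)⟩
  · exact ⟨h, hh, .inl (hha.tail haN hab)⟩
  · exact ⟨h, hh, (hha.dirVia_or_undir hG hab).imp_right (hG.undir_symm h b)⟩

lemma mem_fedByStraight_of_possEdge (hG : IsMaxPDAG G) (ha : a ∈ fedByStraight G N y)
    (haN : a ∈ N) (hab : PossEdge G a b) (hbN : b ∈ N) : b ∈ fedByStraight G N y := by
  obtain ⟨h, hh, hhb | hbh⟩ := dirVia_or_undir_of_mem_fedByStraight hG ha haN hab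
  · exact .inr ⟨h, hh, hhb⟩
  · rcases exists_dir_or_mem_straightSources hG hh hbh hbN with ⟨w, hw, hwb⟩ | hb
    · exact .inr ⟨w, hw, .single hwb⟩
    · exact .inl hb

end Sources

section Treks

/-- The list of nodes of a walk that runs through edges `a ← b` first and continues as a straight
walk. -/
inductive IsTrek (G : MixedGraph V) : List V → Prop
  | straight {l : List V} (h : IsStraight G l) : IsTrek G l
  | cons_dir {a b : V} {l : List V} (hba : G.dir b a) (h : IsTrek G (b :: l)) :
      IsTrek G (a :: b :: l)

lemma IsTrek.of_suffix {l' : List V} (h : IsTrek G l) (hl' : l' <:+ l) : IsTrek G l' := by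
  induction h with
  | straight h => exact .straight (h.of_suffix hl')
  | cons_dir hba h ih =>
    rcases List.suffix_cons_iff.1 hl' with rfl | hl'
    · exact .cons_dir hba h
    · exact ih hl'

lemma IsTrek.isChain_adjacent (h : IsTrek G l) : l.IsChain (adjacent G) := by
  induction h with
  | straight h => exact h.isChain.imp fun _ _ => PossEdge.adjacent
  | cons_dir hba _ ih => exact List.isChain_cons_cons.2 ⟨.inr (.inl hba), ih⟩

/-- Two consecutive steps of a path whose common node is a definite non-collider. -/
def MeetAtDefNonCollider (G : MixedGraph V) (s t : Step V) : Prop :=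
  Step.kind s = .bwd ∨ Step.kind t = .fwd ∨
    (Step.kind s = .und ∧ Step.kind t = .und ∧ ¬ adjacent G (Step.src s) (Step.dst t))

lemma forall_mem_stepPairs_pathOf_cons {P : Step V × Step V → Prop}
    (hhead : ∀ c ∈ l.head?, P ((a, edgeKind G a b, b), (b, edgeKind G b c, c)))
    (htail : ∀ q ∈ stepPairs (pathOf G (b :: l)), P q) :
    ∀ q ∈ stepPairs (pathOf G (a :: b :: l)), P q := by
  cases l with
  | nil => simp [pathOf, stepPairs]
  | cons c l => exact List.forall_mem_cons.2 ⟨hhead c rfl, htail⟩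

lemma IsStraight.meetAtDefNonCollider (hG : IsPDAG G) (h : IsStraight G l) :
    ∀ q ∈ stepPairs (pathOf G l), MeetAtDefNonCollider G q.1 q.2 := by
  induction h with
  | @directed l hl =>
    intro q hq
    have hfwd : ∀ s ∈ pathOf G l, Step.kind s = .fwd :=
      forall_mem_pathOf (hl.imp fun _ _ => edgeKind_of_dir)
    exact .inr (.inl (hfwd q.2 (List.mem_of_mem_tail (List.of_mem_zip hq).2)))
  | @cons_undir a b l hab hl h ih =>
    refine forall_mem_stepPairs_pathOf_cons (fun c hc => .inr ?_) ih
    obtain ⟨m, rfl⟩ := List.head?_eq_some_iff.1 hc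
    exact (hG.edgeKind_of_possEdge (List.isChain_cons_cons.1 h.isChain).1).imp_right fun hbc =>
      ⟨hG.edgeKind_of_undir hab, hbc, (hl c List.mem_cons_self).2⟩

lemma IsTrek.meetAtDefNonCollider (hG : IsPDAG G) (h : IsTrek G l) :
    ∀ q ∈ stepPairs (pathOf G l), MeetAtDefNonCollider G q.1 q.2 := by
  induction h with
  | straight h => exact h.meetAtDefNonCollider hG
  | cons_dir hba _ ih =>
    exact forall_mem_stepPairs_pathOf_cons (fun _ _ => .inl (hG.edgeKind_of_dir_rev hba)) ih

lemma not_collider_of_meetAtDefNonCollider {s t : Step V} (h : MeetAtDefNonCollider G s t) :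
    ¬ (headAtDst (Step.kind s) ∧ headAtSrc (Step.kind t)) := by
  rintro ⟨hs, ht⟩
  rcases h with h | h | ⟨h, -, -⟩
  · rwa [h] at hs
  · rwa [h] at ht
  · rwa [h] at hs

lemma not_blockedDef_of_meetAtDefNonCollider
    (h : ∀ q ∈ stepPairs p, MeetAtDefNonCollider G q.1 q.2)
    (hZ : ∀ v ∈ p.map Step.dst, v ∉ Z) : ¬ blockedDef G p Z := by
  rintro (⟨_, hv, q, hq, rfl, -⟩ | ⟨_, ⟨q, hq, -, hcol⟩, -⟩)
  · exact hZ _ (List.mem_map_of_mem (List.of_mem_zip hq).1) hv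
  · exact not_collider_of_meetAtDefNonCollider (h q hq) hcol

/-- The nodes from which a path within `N` that is a trek leads to `y`. -/
def trekSources (G : MixedGraph V) (N : Set V) (y : V) : Set V :=
  {v | ∃ l, IsTrek G (v :: l) ∧ (v :: l).Nodup ∧ LeadsTo N y (v :: l)}

lemma straightSources_subset_trekSources (hG : IsMaxPDAG G) :
    straightSources G N y ⊆ trekSources G N y :=
  fun _ ⟨l, hl, hly⟩ => ⟨l, .straight hl, (hl.isPossDir hG).nodup, hly⟩

lemma mem_trekSources_of_dir (ha : a ∈ trekSources G N y) (hab : G.dir a b) (hb : b ∈ N) :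
    b ∈ trekSources G N y := by
  obtain ⟨l, hl, hnodup, hly⟩ := ha
  by_cases hbl : b ∈ a :: l
  · obtain ⟨l', hl'⟩ := exists_cons_suffix_of_mem hbl
    exact ⟨l', hl.of_suffix hl', hnodup.sublist hl'.sublist,
      hly.of_suffix hl' (List.cons_ne_nil b l')⟩
  · exact ⟨a :: l, .cons_dir hab hl, List.nodup_cons.2 ⟨hbl, hnodup⟩, hly.cons hb⟩

lemma mem_trekSources_of_dirVia (ha : a ∈ trekSources G N y) (hab : DirVia G N a b)
    (hb : b ∈ N) : b ∈ trekSources G N y := by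
  induction hab with
  | single hab => exact mem_trekSources_of_dir ha hab hb
  | tail _ hf hfb ih => exact mem_trekSources_of_dir (ih hf) hfb hb

lemma exists_mem_trekSources_of_dirVia (ha : a ∈ trekSources G N y) (hab : DirVia G N a b) :
    ∃ f ∈ trekSources G N y, G.dir f b := by
  cases hab with
  | single hab => exact ⟨a, ha, hab⟩
  | tail haf hf hfb => exact ⟨_, mem_trekSources_of_dirVia ha haf hf, hfb⟩

end Treks

section Adjustment

variable {x h : V}

lemma not_dir_of_mem_trekSources (hG : IsPDAG G) (hZ : validAdjMax G X {y} Z)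
    (hNX : Disjoint N X) (hNZ : Disjoint N Z) (hx : x ∈ X) (hh : h ∈ trekSources G N y) :
    ¬ G.dir h x := by
  intro hhx
  obtain ⟨l, hl, hnodup, hly⟩ := hh
  have hlX : ∀ v ∈ h :: l, v ∉ X := fun v hv => Set.disjoint_left.1 hNX (hly.mem v hv)
  have hne : h :: l ≠ [] := List.cons_ne_nil h l
  have htrek : IsTrek G (x :: h :: l) := .cons_dir hhx hl
  have hpath : IsPath G (pathOf G (x :: h :: l)) := hG.isPath_pathOf hne htrek.isChain_adjacent
    (List.nodup_cons.2 ⟨fun hxl => hlX x hxl hx, hnodup⟩)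
  have hmeet := htrek.meetAtDefNonCollider hG
  refine not_blockedDef_of_meetAtDefNonCollider hmeet ?_ <| hZ.2.2.2 _ ⟨hpath,
    ⟨x, hx, startsAt_pathOf hne⟩, ⟨y, rfl, endsAt_pathOf hly.getLast?⟩, ?_⟩
    (fun q hq => .inr (hmeet q hq)) fun hposs => ?_
  · rw [map_dst_pathOf]
    exact fun v hv => Set.disjoint_left.1 hNZ (hly.mem v hv)
  · rwa [pathNodes_pathOf hne]
  · simpa [Step.kind, hG.edgeKind_of_dir_rev hhx] using hposs.1 _ List.mem_cons_self

lemma not_dirVia_of_mem_straightSources (hG : IsMaxPDAG G) (hZ : validAdjMax G X {y} Z)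
    (hNX : Disjoint N X) (hNZ : Disjoint N Z) (hx : x ∈ X) (hh : h ∈ straightSources G N y) :
    ¬ DirVia G N h x := by
  intro hhx
  obtain ⟨f, hf, hfx⟩ :=
    exists_mem_trekSources_of_dirVia (straightSources_subset_trekSources hG hh) hhx
  exact not_dir_of_mem_trekSources hG.toIsPDAG hZ hNX hNZ hx hf hfx

lemma not_undir_of_mem_straightSources (hG : IsMaxPDAG G) (hZ : validAdjMax G X {y} Z)
    (hNX : Disjoint N X) (hNZ : Disjoint N Z) (hx : x ∈ X) (hh : h ∈ straightSources G N y) :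
    ¬ G.undir x h := by
  intro hxh
  obtain ⟨l, hl, hly⟩ := hh
  have hlX : ∀ v ∈ h :: l, v ∉ X := fun v hv => Set.disjoint_left.1 hNX (hly.mem v hv)
  have hdir : ∀ w ∈ h :: l, ¬ G.dir w x := fun w hw hwx =>
    not_dirVia_of_mem_straightSources hG hZ hNX hNZ hx (mem_straightSources_of_mem hl hly hw)
      (.single hwx)
  have hposs : IsPossDir G (x :: h :: l) :=
    (hl.isPossDir hG).cons (.inr hxh) (fun hxl => hlX x hxl hx) hdir
  exact hG.simple_du x h (hZ.2.1.dir_of_isPossDir hG.toIsPDAG hx hposs hlX hly.getLast?) hxh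

lemma notMem_of_possEdge_of_mem_fedByStraight (hG : IsMaxPDAG G) (hZ : validAdjMax G X {y} Z)
    (hNX : Disjoint N X) (hNZ : Disjoint N Z) (ha : a ∈ fedByStraight G N y) (haN : a ∈ N)
    (hab : PossEdge G a b) : b ∉ X := by
  intro hb
  obtain ⟨h, hh, hhb | hbh⟩ := dirVia_or_undir_of_mem_fedByStraight hG ha haN hab
  · exact not_dirVia_of_mem_straightSources hG hZ hNX hNZ hb hh hhb
  · exact not_undir_of_mem_straightSources hG hZ hNX hNZ hb hh hbh

lemma IsMaxPDAG.mem_straightSources_of_mem_posscn (hG : IsMaxPDAG G) (hc : c ∈ posscn G X {y}) :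
    c ∈ straightSources G (posscn G X {y}) y := by
  obtain ⟨x, hx, l, hl, hlX, hly, hcl⟩ := hG.mem_posscn_iff.1 hc
  have hposscn : ∀ v ∈ l, v ∈ posscn G X {y} := fun v hv =>
    hG.mem_posscn_iff.2 ⟨x, hx, l, hl, hlX, hly, hv⟩
  obtain ⟨m, hm⟩ := exists_cons_suffix_of_mem hcl
  obtain ⟨l', hl', hstraight, hlast⟩ :=
    (hl.infix (hm.trans (List.suffix_cons x l)).isInfix).exists_isStraight hG
  refine ⟨l', hstraight, fun v hv => hposscn v (hm.mem (List.cons_subset_cons c hl' hv)), ?_⟩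
  rw [hlast, getLast?_eq_of_suffix hm (List.cons_ne_nil c m), hly]

lemma straightSources_mono {M : Set V} (hMN : M ⊆ N) :
    straightSources G M y ⊆ straightSources G N y :=
  fun _ ⟨l, hl, hly⟩ => ⟨l, hl, fun v hv => hMN (hly.mem v hv), hly.getLast?⟩

lemma posscn_subset_forbP_diff (G : MixedGraph V) (X Y : Set V) :
    posscn G X Y ⊆ forbP G X Y \ X :=
  fun c hc => ⟨.inl ⟨c, hc, .inl rfl⟩, hc.1⟩

lemma disjoint_possdeSet_posscn (hG : IsMaxPDAG G) (hZ : validAdjMax G X {y} Z) :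
    Disjoint (possdeSet G (posscn G X {y})) X := by
  rw [Set.disjoint_left]
  rintro d ⟨c, hc, hcd⟩
  set N := forbP G X {y} \ X
  have hNX : Disjoint N X := Set.disjoint_sdiff_left
  have hNZ : Disjoint N Z :=
    (Set.disjoint_iff_inter_eq_empty.2 hZ.2.2.1).symm.mono_left Set.sdiff_subset
  have hcN := posscn_subset_forbP_diff G X {y} hc
  have hsource := straightSources_mono (posscn_subset_forbP_diff G X {y})
    (hG.mem_straightSources_of_mem_posscn hc)
  obtain ⟨l, hl, hld⟩ := hG.possDescendant_iff.1 hcd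
  have hchain : (c :: l).IsChain fun u v => PossEdge G u v ∧ possDescendant G c v :=
    hl.isChain.imp_of_mem_imp fun u v _ hv huv => ⟨huv, hG.possDescendant_of_mem hl hv⟩
  have hinv := hchain.cons_induction (fun v => v ∈ N ∧ v ∈ fedByStraight G N y) l
    (fun u v ⟨huv, hcv⟩ ⟨huN, hu⟩ => by
      have hvX := notMem_of_possEdge_of_mem_fedByStraight hG hZ hNX hNZ hu huN huv
      have hvN : v ∈ N := ⟨.inl ⟨c, hc, hcv⟩, hvX⟩
      exact ⟨hvN, mem_fedByStraight_of_possEdge hG hu huN huv hvN⟩)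
    ⟨hcN, .inl hsource⟩
  rcases List.mem_cons.1 (List.mem_of_getLast? hld) with rfl | hd
  · exact hcN.2
  · exact (hinv d hd).1.2

end Adjustment

section Bidirected

lemma IsPath.exists_dir_of_startsWithArrowIn (hG : IsPDAG G) (hp : IsPath G p)
    (ha : startsAt p a) (hint : interiorNodes p ≠ []) (harrow : startsWithArrowIn p) :
    ∃ f ∈ interiorNodes p, G.dir f a := by
  obtain ⟨s, p, rfl, hs⟩ := harrow
  obtain rfl : Step.src s = a := by simpa [startsAt, pathNodes] using ha
  refine ⟨Step.dst s, ?_, ?_⟩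
  · rw [interiorNodes_eq_dropLast] at hint ⊢
    cases p <;> simp_all
  · have hok := hp.valid s List.mem_cons_self
    unfold stepOK at hok
    have := hG.no_bidir
    cases hk : Step.kind s <;> simp_all [headAtSrc]

lemma IsPath.exists_dir_of_endsWithArrowIn (hG : IsPDAG G) (hp : IsPath G p)
    (hb : endsAt p b) (hint : interiorNodes p ≠ []) (harrow : endsWithArrowIn p) :
    ∃ f ∈ interiorNodes p, G.dir f b := by
  obtain ⟨s, p, rfl, hs⟩ := harrow
  obtain rfl : Step.dst s = b := by simpa [endsAt, getLast?_pathNodes] using hb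
  refine ⟨Step.src s, ?_, ?_⟩
  · rw [interiorNodes_eq_tail hp.chain] at hint ⊢
    cases p <;> simp_all
  · have hok := hp.valid s (by simp)
    unfold stepOK at hok
    have := hG.no_bidir
    cases hk : Step.kind s <;> simp_all [headAtDst]

lemma IsPDAG.exists_dir_of_forbProjection_bidir (hG : IsPDAG G)
    (h : (forbProjection G F).bidir a b) :
    a ∉ F ∧ b ∉ F ∧ a ≠ b ∧ (∃ f ∈ F, G.dir f a) ∧ ∃ f ∈ F, G.dir f b := by
  obtain ⟨haF, hbF, p, hp, ha, hb, hint, hstart, hend, hF⟩ := h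
  obtain ⟨f, hf, hfa⟩ := hp.exists_dir_of_startsWithArrowIn hG ha hint hstart
  obtain ⟨g, hg, hgb⟩ := hp.exists_dir_of_endsWithArrowIn hG hb hint hend
  refine ⟨haF, hbF, ?_, ⟨f, (hF f hf).1, hfa⟩, ⟨g, (hF g hg).1, hgb⟩⟩
  rintro rfl
  have hnodup := hp.nodup
  rw [pathNodes_eq_cons_append hp.nonempty ha hb] at hnodup
  simp at hnodup

lemma IsMaxPDAG.mem_possdeSet_of_dir (hG : IsMaxPDAG G) {A : Set V} (ha : a ∈ possdeSet G A)
    (hab : G.dir a b) : b ∈ possdeSet G A :=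
  let ⟨c, hc, hca⟩ := ha
  ⟨c, hc, hG.possDescendant_of_dir hca hab⟩

lemma eq_of_dir_of_mem_forbidden (hG : IsMaxPDAG G) (hZ : validAdjMax G X {y} Z)
    (ha : a ∈ forbP G X {y} \ (X ∪ {y})) (hab : G.dir a b)
    (hb : b ∉ forbP G X {y} \ (X ∪ {y})) : b = y := by
  have haX : a ∉ X := fun h => ha.2 (.inl h)
  have hbD := hG.mem_possdeSet_of_dir (ha.1.resolve_right haX) hab
  have hbX : b ∉ X := Set.disjoint_left.1 (disjoint_possdeSet_posscn hG hZ) hbD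
  by_contra hby
  exact hb ⟨.inl hbD, not_or.2 ⟨hbX, hby⟩⟩

lemma not_bidir_maxProj (hG : IsMaxPDAG G) (hZ : validAdjMax G X {y} Z) :
    ¬ (maxProj G X {y}).bidir a b := by
  intro h
  obtain ⟨ha, hb, hne, ⟨f, hf, hfa⟩, ⟨g, hg, hgb⟩⟩ := hG.exists_dir_of_forbProjection_bidir h
  exact hne <| (eq_of_dir_of_mem_forbidden hG hZ hf hfa ha).trans
    (eq_of_dir_of_mem_forbidden hG hZ hg hgb hb).symm

end Bidirected

end Causal

open Causal in
theorem forbidden_projection_is_maxpdag_general {V : Type*} {G : MixedGraph V} {X : Set V} {Y : V}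
    (hG : IsMaxPDAG G) (hexists : ∃ Z, validAdjMax G X {Y} Z) : IsMaxPDAG (maxProj G X {Y}) := by
  obtain ⟨Z, hZ⟩ := hexists
  exact hG.isMaxPDAG_forbProjection fun _ _ => not_bidir_maxProj hG hZ

open Causal in
/-- For a maxPDAG `G` amenable relative to `(X,{Y})` in which a valid
adjustment set exists: the forbidden projection `G^{XY}` has no bi-directed edges and
no directed cycles, and it is closed under Meek's rules R1–R4; in particular `G^{XY}`
is itself a maxPDAG. -/
theorem forbidden_projection_is_maxpdag
    {V : Type*} [Fintype V] (G : MixedGraph V) (X : Set V) (Y : V)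
    (hG : IsMaxPDAG G) (hY : Y ∉ X)
    (hamen : amenable G X {Y}) (hexists : ∃ Z, validAdjMax G X {Y} Z) :
    (∀ a b, ¬ (maxProj G X {Y}).bidir a b) ∧
    (∀ a b, (∃ p, directedPathFromTo (maxProj G X {Y}) p a b) →
        ¬ (maxProj G X {Y}).dir b a) ∧
    (∀ a b c, (maxProj G X {Y}).dir a b → (maxProj G X {Y}).undir b c →
        ¬ adjacent (maxProj G X {Y}) a c → (maxProj G X {Y}).dir b c) ∧
    (∀ a b c, (maxProj G X {Y}).dir a b → (maxProj G X {Y}).dir b c →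
        (maxProj G X {Y}).undir a c → (maxProj G X {Y}).dir a c) ∧
    (∀ a b c d, (maxProj G X {Y}).undir a b → (maxProj G X {Y}).undir a c →
        (maxProj G X {Y}).undir a d → (maxProj G X {Y}).dir b d →
        (maxProj G X {Y}).dir c d → ¬ adjacent (maxProj G X {Y}) b c →
        (maxProj G X {Y}).dir a d) ∧
    (∀ a b c d, (maxProj G X {Y}).undir a b → (maxProj G X {Y}).dir a c →
        (maxProj G X {Y}).undir b c → (maxProj G X {Y}).dir c d →
        (maxProj G X {Y}).undir b d → (maxProj G X {Y}).dir b d) ∧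
    IsMaxPDAG (maxProj G X {Y}) := by
  have h := forbidden_projection_is_maxpdag_general hG hexists
  exact ⟨h.no_bidir, h.acyclic, h.meek1, h.meek2, h.meek3, h.meek4, h⟩
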